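/- Let n ≥ 2, f ∈ C¹(ℝ), and let u be a W^{3,1}_loc(ℝⁿ) stable solution of div(∇u/√(1+|∇u|²)) = −f(u) in ℝⁿ. Define q_n := −1 if 2 ≤ n ≤ 10, and q_n := −n/2 + √(n−1) + 1 if n ≥ 11. If u satisfies the growth condition |∇u(x)| = o(|x|^{q_n}) as |x| → +∞, then u is constant. -/

import Mathlib

open MeasureTheory Metric Real Filter Asymptotics Bornology
open scoped RealInnerProductSpace Topology

noncomputable section

/-- Euclidean space `ℝⁿ`. -/
abbrev Euc (n : ℕ) := EuclideanSpace ℝ (Fin n)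

/-- `φ` is an admissible test function on `Ω`: smooth with compact support contained in `Ω`
(i.e. `φ ∈ C_c^∞(Ω)`). -/
def IsTestFun {n : ℕ} (Ω : Set (Euc n)) (φ : Euc n → ℝ) : Prop :=
  ContDiff ℝ (⊤ : ℕ∞) φ ∧ HasCompactSupport φ ∧ tsupport φ ⊆ Ω

/-- `u` is a weak solution of the mean curvature equation
`div(∇u/√(1+|∇u|²)) = -f(u)` in `Ω`:  `u ∈ W^{1,1}_loc(Ω)`, `f(u) ∈ L¹_loc(Ω)` and
`∫_Ω ∇u·∇φ/√(1+|∇u|²) = ∫_Ω f(u) φ` for every `φ ∈ C_c^∞(Ω)`. -/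
def IsWeakSolution {n : ℕ} (Ω : Set (Euc n)) (f : ℝ → ℝ) (u : Euc n → ℝ) : Prop :=
  LocallyIntegrableOn u Ω ∧
  LocallyIntegrableOn (fun x => ‖gradient u x‖) Ω ∧
  LocallyIntegrableOn (fun x => f (u x)) Ω ∧
  ∀ φ : Euc n → ℝ, IsTestFun Ω φ →
    ∫ x in Ω, ⟪gradient u x, gradient φ x⟫ / Real.sqrt (1 + ‖gradient u x‖ ^ 2)
      = ∫ x in Ω, f (u x) * φ x

/-- `u` is a stable solution of `div(∇u/√(1+|∇u|²)) = -f(u)` in `Ω`: it is a weak solution,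
`f'(u) ∈ L¹_loc(Ω)` and the second variation of the energy at `u` is nonnegative:
`∫_Ω f'(u) ξ² ≤ ∫_Ω (|∇ξ|²/√(1+|∇u|²) - (∇u·∇ξ)²/(1+|∇u|²)^{3/2})` for all `ξ ∈ C_c^∞(Ω)`. -/
def IsStableSolution {n : ℕ} (Ω : Set (Euc n)) (f : ℝ → ℝ) (u : Euc n → ℝ) : Prop :=
  IsWeakSolution Ω f u ∧
  LocallyIntegrableOn (fun x => deriv f (u x)) Ω ∧
  ∀ ξ : Euc n → ℝ, IsTestFun Ω ξ →
    ∫ x in Ω, deriv f (u x) * ξ x ^ 2 ≤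
      ∫ x in Ω, (‖gradient ξ x‖ ^ 2 / Real.sqrt (1 + ‖gradient u x‖ ^ 2)
        - ⟪gradient u x, gradient ξ x⟫ ^ 2 / (1 + ‖gradient u x‖ ^ 2) ^ ((3:ℝ)/2))

/-- A vector field `g` belongs to the Morrey space `M^p(Ω)`: there is `K > 0` with
`∫_{B_ρ(x₀) ∩ Ω} |g| ≤ K ρ^{n(1-1/p)}` for all `x₀ ∈ Ω` and `0 < ρ ≤ diam Ω`. -/
def MemMorrey {n : ℕ} (Ω : Set (Euc n)) (p : ℝ) (g : Euc n → Euc n) : Prop :=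
  ∃ K > (0:ℝ), ∀ x₀ ∈ Ω, ∀ ρ : ℝ, 0 < ρ → ρ ≤ Metric.diam Ω →
    ∫ x in Metric.ball x₀ ρ ∩ Ω, ‖g x‖ ≤ K * ρ ^ ((n : ℝ) * (1 - 1 / p))

/-!
Testing stability with `(x · ∇u) η` and subtracting the equation that `x · ∇u` satisfies (the
derivative of the equation for `u` along dilations, tested with `(x · ∇u) η²`) eliminates `f`, and
an integration by parts along `x` then removes the second derivatives of `u`: what is left is
`0 ≤ ∫ Q(x, ∇u, η, ∇η)` with `Q` quadratic in `(η, ∇η)`. For `η = (1 + |x|²)^(-a/2)`, with `a` in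
the range that `q_n` allows, `Q` is negative wherever `∇u ≠ 0`. Cutting `η` off between `|x| = R`
and `|x| = 2R` costs `O(R^n R^(-2a) sup |∇u|²)`, the supremum being over that annulus, and this
tends to `0` when `|∇u| = o(|x|^(a - n/2))`. Hence `∇u = 0`.
-/

section Gradient

variable {E : Type*} [NormedAddCommGroup E] [InnerProductSpace ℝ E] [CompleteSpace E]

lemma contDiff_gradient {φ : E → ℝ} {k m : WithTop ℕ∞} (hφ : ContDiff ℝ m φ) (hkm : k + 1 ≤ m) :
    ContDiff ℝ k (gradient φ) :=
  (InnerProductSpace.toDual ℝ E).symm.contDiff.comp (hφ.fderiv_right hkm)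

lemma gradient_eq_zero_of_notMem_tsupport {φ : E → ℝ} {x : E} (hx : x ∉ tsupport φ) :
    gradient φ x = 0 := by
  simp [gradient, fderiv_of_notMem_tsupport ℝ hx]

lemma norm_gradient_sub_gradient (φ ψ : E → ℝ) (x : E) :
    ‖gradient φ x - gradient ψ x‖ = ‖fderiv ℝ φ x - fderiv ℝ ψ x‖ := by
  rw [gradient, gradient, ← map_sub, LinearIsometryEquiv.norm_map]

lemma hasGradientAt_mul {φ ψ : E → ℝ} {p q x : E} (hφ : HasGradientAt φ p x)
    (hψ : HasGradientAt ψ q x) : HasGradientAt (fun y => φ y * ψ y) (φ x • q + ψ x • p) x := by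
  rw [hasGradientAt_iff_hasFDerivAt] at *
  exact (hφ.mul hψ).congr_fderiv (by simp)

lemma hasLineDerivAt_inner_gradient {φ : E → ℝ} {x : E} (hφ : DifferentiableAt ℝ φ x) (y : E) :
    HasLineDerivAt ℝ φ ⟪y, gradient φ x⟫ x y := by
  rw [inner_gradient_right, conj_trivial]
  exact hφ.hasFDerivAt.hasLineDerivAt y

lemma inner_fderiv_gradient_symm {φ : E → ℝ} (hφ : ContDiff ℝ 2 φ) (x y z : E) :
    ⟪fderiv ℝ (gradient φ) x y, z⟫ = ⟪fderiv ℝ (gradient φ) x z, y⟫ := by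
  have hgrad : HasFDerivAt (gradient φ) (fderiv ℝ (gradient φ) x) x :=
    ((contDiff_gradient (k := 1) hφ (by norm_num)).differentiable one_ne_zero x).hasFDerivAt
  have hfderiv : HasFDerivAt (fderiv ℝ φ) (fderiv ℝ (fderiv ℝ φ) x) x :=
    ((hφ.fderiv_right (m := 1) (by norm_num)).differentiable one_ne_zero x).hasFDerivAt
  have hsecond (y z : E) : ⟪fderiv ℝ (gradient φ) x y, z⟫ = fderiv ℝ (fderiv ℝ φ) x y z := by
    have h₁ := hgrad.inner ℝ (hasFDerivAt_const z x)
    have h₂ := hfderiv.clm_apply (hasFDerivAt_const z x)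
    simp only [inner_gradient_left] at h₁
    simpa using congr($(h₁.unique h₂) y)
  rw [hsecond, hsecond]
  exact hφ.contDiffAt.isSymmSndFDerivAt (by simp) y z

/-- The radial derivative `x · ∇u(x)`, the generator of the dilations of the domain of `u`. -/
def radialDeriv (u : E → ℝ) (x : E) : ℝ := ⟪x, gradient u x⟫

lemma contDiff_radialDeriv {φ : E → ℝ} {k m : WithTop ℕ∞} (hφ : ContDiff ℝ m φ) (hkm : k + 1 ≤ m) :
    ContDiff ℝ k (radialDeriv φ) :=
  contDiff_id.inner ℝ (contDiff_gradient hφ hkm)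

lemma hasGradientAt_radialDeriv {φ : E → ℝ} (hφ : ContDiff ℝ 2 φ) (x : E) :
    HasGradientAt (radialDeriv φ) (gradient φ x + fderiv ℝ (gradient φ) x x) x := by
  have hd : DifferentiableAt ℝ (gradient φ) x :=
    (contDiff_gradient (k := 1) hφ (by norm_num)).differentiable one_ne_zero x
  rw [hasGradientAt_iff_hasFDerivAt]
  refine ((hasFDerivAt_id x).inner ℝ hd.hasFDerivAt).congr_fderiv ?_
  ext y
  simp [inner_fderiv_gradient_symm hφ x x y, real_inner_comm, add_comm]

end Gradient

section Integration

section RadialDivergence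

variable {E : Type*} [NormedAddCommGroup E] [NormedSpace ℝ E] [MeasurableSpace E]
  [BorelSpace E] {μ : Measure E} {g g' : E → ℝ}

lemma integrable_radial_divergence [IsFiniteMeasureOnCompacts μ] (hg : ContDiff ℝ 1 g)
    (hc : HasCompactSupport g) (hg' : ∀ x, HasLineDerivAt ℝ g (g' x) x x) :
    Integrable (fun x => g' x + Module.finrank ℝ E * g x) μ := by
  have : Continuous (fderiv ℝ g) := hg.continuous_fderiv one_ne_zero
  have heq (x : E) : g' x = fderiv ℝ g x x := by
    rw [← (hg.differentiable one_ne_zero x).lineDeriv_eq_fderiv, (hg' x).lineDeriv]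
  simp_rw [heq]
  refine .add (Continuous.integrable_of_hasCompactSupport (by fun_prop) ?_)
    ((hg.continuous.integrable_of_hasCompactSupport hc).const_mul _)
  exact .intro hc fun x hx => by simp [fderiv_of_notMem_tsupport ℝ hx]

lemma integral_radial_divergence_eq_zero [FiniteDimensional ℝ E] [μ.IsAddHaarMeasure]
    (hg : ContDiff ℝ 1 g) (hc : HasCompactSupport g)
    (hg' : ∀ x, HasLineDerivAt ℝ g (g' x) x x) :
    ∫ x, (g' x + Module.finrank ℝ E * g x) ∂μ = 0 := by
  have hdiff : Differentiable ℝ g := hg.differentiable one_ne_zero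
  have : Continuous (fderiv ℝ g) := hg.continuous_fderiv one_ne_zero
  let b := Module.finBasis ℝ E
  let ℓ (k) : E →L[ℝ] ℝ := LinearMap.toContinuousLinearMap (b.coord k)
  have hℓ (k) (x : E) : fderiv ℝ (ℓ k) x (b k) = 1 := by
    rw [(ℓ k).fderiv]
    simp [ℓ]
  have hint (k) : Integrable (fun x => ℓ k x * fderiv ℝ g x (b k)) μ :=
    Continuous.integrable_of_hasCompactSupport (by fun_prop)
      (hc.fderiv_apply ℝ (b k)).mul_left
  have hint_g : Integrable g μ := hg.continuous.integrable_of_hasCompactSupport hc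
  have hcoord (k) : ∫ x, ℓ k x * fderiv ℝ g x (b k) ∂μ = -∫ x, g x ∂μ := by
    rw [integral_mul_fderiv_eq_neg_fderiv_mul_of_integrable
      (by simpa only [hℓ, one_mul] using hint_g) (hint k)
      (Continuous.integrable_of_hasCompactSupport (by fun_prop) hc.mul_left)
      (fun x _ => (ℓ k).differentiableAt) (fun x _ => hdiff x)]
    simp only [hℓ, one_mul]
  have hexpand (x : E) : g' x = ∑ k, ℓ k x * fderiv ℝ g x (b k) :=
    calc g' x = fderiv ℝ g x (∑ k, b.repr x k • b k) := by
          rw [b.sum_repr, ← (hdiff x).lineDeriv_eq_fderiv, (hg' x).lineDeriv]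
      _ = ∑ k, ℓ k x * fderiv ℝ g x (b k) := by simp [ℓ, -Module.Basis.sum_repr]
  simp_rw [hexpand]
  rw [integral_add (integrable_finsetSum _ fun k _ => hint k) (hint_g.const_mul _),
    integral_finsetSum _ fun k _ => hint k, integral_const_mul]
  simp [hcoord]

end RadialDivergence

lemma fderiv_convolution_lsmul {E F : Type*} [NormedAddCommGroup E] [NormedSpace ℝ E]
    [MeasurableSpace E] [BorelSpace E] [NormedAddCommGroup F] [NormedSpace ℝ F] {μ : Measure E}
    [SFinite μ] [μ.IsAddLeftInvariant] {k : E → ℝ} {ξ : E → F} (hk : LocallyIntegrable k μ)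
    (hξ : ContDiff ℝ 1 ξ) (hc : HasCompactSupport ξ) (x : E) :
    fderiv ℝ (convolution k ξ (ContinuousLinearMap.lsmul ℝ ℝ) μ) x =
      convolution k (fderiv ℝ ξ) (ContinuousLinearMap.lsmul ℝ ℝ) μ x := by
  have hprecomp : (ContinuousLinearMap.lsmul ℝ ℝ : ℝ →L[ℝ] F →L[ℝ] F).precompR E
      = ContinuousLinearMap.lsmul ℝ ℝ := by
    ext; simp
  rw [(hc.hasFDerivAt_convolution_right _ hk hξ x).fderiv, hprecomp]

lemma exists_contDiff_approx {E F : Type*} [NormedAddCommGroup E] [NormedSpace ℝ E]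
    [FiniteDimensional ℝ E] [NormedAddCommGroup F] [NormedSpace ℝ F] [CompleteSpace F] {ξ : E → F}
    (hξ : ContDiff ℝ 1 ξ) (hc : HasCompactSupport ξ) {ε : ℝ} (hε : 0 < ε) :
    ∃ s : E → F, ContDiff ℝ (⊤ : ℕ∞) s ∧ tsupport s ⊆ cthickening ε (tsupport ξ) ∧
      ∀ x, ‖s x - ξ x‖ ≤ ε ∧ ‖fderiv ℝ s x - fderiv ℝ ξ x‖ ≤ ε := by
  borelize E
  let μ : Measure E := Measure.addHaar
  have hcont' : Continuous (fderiv ℝ ξ) := hξ.continuous_fderiv one_ne_zero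
  obtain ⟨δ₁, hδ₁, hunif⟩ := Metric.uniformContinuous_iff.1
    (hc.uniformContinuous_of_continuous hξ.continuous) ε hε
  obtain ⟨δ₂, hδ₂, hunif'⟩ := Metric.uniformContinuous_iff.1
    ((hc.fderiv ℝ).uniformContinuous_of_continuous hcont') ε hε
  have hδ : 0 < min ε (min δ₁ δ₂) := lt_min hε (lt_min hδ₁ hδ₂)
  let b : ContDiffBump (0 : E) := ⟨_, _, half_pos hδ, half_lt_self hδ⟩
  have hb {x y : E} (hy : y ∈ ball x b.rOut) : dist y x < ε ∧ dist y x < δ₁ ∧ dist y x < δ₂ := by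
    simpa [b] using hy
  let s : E → F := convolution (b.normed μ) ξ (ContinuousLinearMap.lsmul ℝ ℝ) μ
  have hfderiv (x : E) : fderiv ℝ s x =
      convolution (b.normed μ) (fderiv ℝ ξ) (ContinuousLinearMap.lsmul ℝ ℝ) μ x :=
    fderiv_convolution_lsmul b.continuous_normed.locallyIntegrable hξ hc x
  refine ⟨s, ?_, ?_, fun x => ⟨?_, ?_⟩⟩
  · exact b.hasCompactSupport_normed.contDiff_convolution_left _ b.contDiff_normed
      hξ.continuous.locallyIntegrable
  · refine closure_minimal ((support_convolution_subset _).trans ?_) isClosed_cthickening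
    rintro _ ⟨y, hy, z, hz, rfl⟩
    rw [b.support_normed_eq] at hy
    exact mem_cthickening_of_dist_le _ z _ _ (subset_tsupport _ hz)
      (by simpa using (hb hy).1.le)
  · rw [← dist_eq_norm]
    exact b.dist_normed_convolution_le hξ.continuous.aestronglyMeasurable
      fun y hy => (hunif (hb hy).2.1).le
  · rw [hfderiv, ← dist_eq_norm]
    exact b.dist_normed_convolution_le hcont'.aestronglyMeasurable
      fun y hy => (hunif' (hb hy).2.2).le

variable {E : Type*} [NormedAddCommGroup E] [InnerProductSpace ℝ E] [FiniteDimensional ℝ E]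
  [MeasurableSpace E] [BorelSpace E]

lemma integral_mem_of_forall_smooth {μ : Measure E} [IsFiniteMeasureOnCompacts μ]
    {Φ : E × ℝ × E → ℝ} (hΦ : Continuous Φ) (hΦ₀ : ∀ x, Φ (x, 0, 0) = 0) {S : Set ℝ}
    (hS : IsClosed S)
    (hsmooth : ∀ s : E → ℝ, ContDiff ℝ (⊤ : ℕ∞) s → HasCompactSupport s →
      ∫ x, Φ (x, s x, gradient s x) ∂μ ∈ S)
    {ξ : E → ℝ} (hξ : ContDiff ℝ 1 ξ) (hc : HasCompactSupport ξ) :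
    ∫ x, Φ (x, ξ x, gradient ξ x) ∂μ ∈ S := by
  obtain ⟨ε, -, hε, hε_lim⟩ := exists_seq_strictAnti_tendsto' (zero_lt_one' ℝ)
  choose s hs hsupp hclose using fun k => exists_contDiff_approx hξ hc (hε k).1
  let K := cthickening 1 (tsupport ξ)
  have hK : IsCompact K := hc.cthickening
  have hsK (k) : tsupport (s k) ⊆ K := (hsupp k).trans (cthickening_mono (hε k).2.le _)
  have hgrad (k) (x : E) : ‖gradient (s k) x - gradient ξ x‖ ≤ ε k := by
    rw [norm_gradient_sub_gradient]
    exact (hclose k x).2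
  have hξ' : Continuous (gradient ξ) := (contDiff_gradient (k := 0) hξ (by simp)).continuous
  obtain ⟨C, hC⟩ := hK.exists_bound_of_continuousOn hξ.continuous.continuousOn
  obtain ⟨C', hC'⟩ := hK.exists_bound_of_continuousOn hξ'.continuousOn
  obtain ⟨B, hB⟩ := (hK.prod ((isCompact_closedBall (0 : ℝ) (C + 1)).prod
    (isCompact_closedBall (0 : E) (C' + 1)))).exists_bound_of_continuousOn hΦ.continuousOn
  refine hS.mem_of_tendsto (tendsto_integral_of_dominated_convergence (K.indicator fun _ => B)
    (fun k => ?_) ?_ (fun k => .of_forall fun x => ?_) (.of_forall fun x => ?_))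
    (.of_forall fun k => hsmooth (s k) (hs k) (hK.of_isClosed_subset (isClosed_tsupport _) (hsK k)))
  · have := (contDiff_gradient (k := 0) (hs k) (by simp)).continuous
    have := (hs k).continuous
    exact (hΦ.comp (by fun_prop)).aestronglyMeasurable
  · exact (integrable_indicator_iff hK.measurableSet).2 (integrableOn_const hK.measure_lt_top.ne)
  · by_cases hx : x ∈ K
    · rw [Set.indicator_of_mem hx]
      refine hB _ ⟨hx, ?_, ?_⟩ <;> rw [mem_closedBall_zero_iff]
      · linarith [norm_le_norm_add_norm_sub' (s k x) (ξ x), (hclose k x).1, hC x hx, (hε k).2]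
      · linarith [norm_le_norm_add_norm_sub' (gradient (s k) x) (gradient ξ x), hgrad k x,
          hC' x hx, (hε k).2]
    · have hx' : x ∉ tsupport (s k) := fun h => hx (hsK k h)
      simp [hx, image_eq_zero_of_notMem_tsupport hx', gradient_eq_zero_of_notMem_tsupport hx', hΦ₀]
  · refine (hΦ.tendsto _).comp (tendsto_const_nhds.prodMk_nhds (Tendsto.prodMk_nhds ?_ ?_)) <;>
      rw [tendsto_iff_norm_sub_tendsto_zero]
    · exact squeeze_zero (fun _ => norm_nonneg _) (fun k => (hclose k x).1) hε_lim
    · exact squeeze_zero (fun _ => norm_nonneg _) (fun k => hgrad k x) hε_lim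

end Integration

section AreaElement

variable {E : Type*} [NormedAddCommGroup E]

/-- The area element `√(1 + |p|²)` of a graph with slope `p`. -/
def areaElement (p : E) : ℝ := √(1 + ‖p‖ ^ 2)

lemma areaElement_sq (p : E) : areaElement p ^ 2 = 1 + ‖p‖ ^ 2 := sq_sqrt (by positivity)

lemma one_le_areaElement (p : E) : 1 ≤ areaElement p := one_le_sqrt.2 (by simp)

lemma areaElement_pos (p : E) : 0 < areaElement p := one_pos.trans_le (one_le_areaElement p)

@[simp]
lemma areaElement_ne_zero (p : E) : areaElement p ≠ 0 := (areaElement_pos p).ne'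

lemma rpow_three_halves_eq_areaElement_pow (p : E) :
    (1 + ‖p‖ ^ 2) ^ ((3 : ℝ) / 2) = areaElement p ^ 3 := by
  rw [areaElement, sqrt_eq_rpow, ← rpow_mul_natCast (by positivity)]
  norm_num

variable [InnerProductSpace ℝ E]

lemma contDiff_areaElement {k : WithTop ℕ∞} : ContDiff ℝ k (areaElement : E → ℝ) :=
  (contDiff_const.add (contDiff_norm_sq ℝ)).sqrt fun p => by positivity

@[fun_prop]
lemma continuous_areaElement : Continuous (areaElement : E → ℝ) :=
  (contDiff_areaElement (k := 0)).continuous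

/-- The Hessian at `p` of the area integrand `p ↦ √(1 + |p|²)`, as a bilinear form in `(ξ, ζ)`. -/
def areaHessian (p ξ ζ : E) : ℝ :=
  ⟪ξ, ζ⟫ / areaElement p - ⟪p, ξ⟫ * ⟪p, ζ⟫ / areaElement p ^ 3

@[fun_prop]
lemma continuous_areaHessian {X : Type*} [TopologicalSpace X] {p ξ ζ : X → E}
    (hp : Continuous p) (hξ : Continuous ξ) (hζ : Continuous ζ) :
    Continuous fun x => areaHessian (p x) (ξ x) (ζ x) := by
  unfold areaHessian
  fun_prop (disch := simp)

lemma areaHessian_comm (p ξ ζ : E) : areaHessian p ξ ζ = areaHessian p ζ ξ := by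
  rw [areaHessian, areaHessian, real_inner_comm, mul_comm]

lemma areaHessian_self_eq (p ξ : E) : areaHessian p ξ ξ =
    ‖ξ‖ ^ 2 / √(1 + ‖p‖ ^ 2) - ⟪p, ξ⟫ ^ 2 / (1 + ‖p‖ ^ 2) ^ ((3 : ℝ) / 2) := by
  rw [areaHessian, rpow_three_halves_eq_areaElement_pow, real_inner_self_eq_norm_sq, areaElement,
    sq ⟪p, ξ⟫]

lemma areaHessian_self_le (p ξ : E) : areaHessian p ξ ξ ≤ ‖ξ‖ ^ 2 := by
  have hw := areaElement_pos p
  rw [areaHessian, real_inner_self_eq_norm_sq, ← sq]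
  exact (sub_le_self _ (by positivity)).trans
    (div_le_self (by positivity) (one_le_areaElement p))

lemma areaHessian_add_left (p ξ₁ ξ₂ ζ : E) :
    areaHessian p (ξ₁ + ξ₂) ζ = areaHessian p ξ₁ ζ + areaHessian p ξ₂ ζ := by
  simp only [areaHessian, inner_add_left, inner_add_right]
  ring

lemma areaHessian_self_left (p ζ : E) : areaHessian p p ζ = ⟪p, ζ⟫ / areaElement p ^ 3 := by
  have hw := areaElement_sq p
  rw [areaHessian, real_inner_self_eq_norm_sq, ← sub_eq_of_eq_add' hw]
  field_simp [areaElement_ne_zero p]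
  ring

/-- The algebraic identity behind Caccioppoli estimates for test functions of the form `v η²`. -/
lemma areaHessian_smul_add_smul (p g ν : E) (v η : ℝ) :
    areaHessian p (v • ν + η • g) (v • ν + η • g) =
      areaHessian p g (η ^ 2 • g + (2 * v * η) • ν) + v ^ 2 * areaHessian p ν ν := by
  simp only [areaHessian, inner_add_left, inner_add_right, real_inner_smul_left,
    real_inner_smul_right, real_inner_comm g ν]
  ring

variable {P N : ℝ → E} {P' N' : E} {t : ℝ}

lemma hasDerivAt_areaElement (hP : HasDerivAt P P' t) :
    HasDerivAt (fun s => areaElement (P s)) (⟪P t, P'⟫ / areaElement (P t)) t := by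
  refine ((hP.norm_sq.const_add 1).sqrt (by positivity)).congr_deriv ?_
  rw [areaElement]
  ring

lemma hasDerivAt_inner_div_areaElement (hP : HasDerivAt P P' t) (hN : HasDerivAt N N' t) :
    HasDerivAt (fun s => ⟪P s, N s⟫ / areaElement (P s))
      (areaHessian (P t) P' (N t) + ⟪P t, N'⟫ / areaElement (P t)) t := by
  refine ((hP.inner ℝ hN).div (hasDerivAt_areaElement hP) (areaElement_ne_zero _)).congr_deriv ?_
  rw [areaHessian]
  field_simp [areaElement_ne_zero (P t)]
  ring

lemma hasDerivAt_norm_sq_div_areaElement (hP : HasDerivAt P P' t) :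
    HasDerivAt (fun s => ‖P s‖ ^ 2 / areaElement (P s))
      ((1 / areaElement (P t) + 1 / areaElement (P t) ^ 3) * ⟪P t, P'⟫) t := by
  simp only [← real_inner_self_eq_norm_sq]
  refine (hasDerivAt_inner_div_areaElement hP hP).congr_deriv ?_
  rw [areaHessian_comm, areaHessian_self_left]
  ring

end AreaElement

section Variation

variable {E : Type*} [NormedAddCommGroup E] [InnerProductSpace ℝ E] [CompleteSpace E]
  {f : ℝ → ℝ} {u v φ η : E → ℝ}

/-- The integrand, at `u` in the direction `φ`, of the first variation of the energy
`∫ (√(1 + |∇u|²) - F(u))`, where `F' = f`. -/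
def firstVariation (f : ℝ → ℝ) (u φ : E → ℝ) (x : E) : ℝ :=
  ⟪gradient u x, gradient φ x⟫ / areaElement (gradient u x) - f (u x) * φ x

/-- The integrand, at `u` in the directions `φ` and `ψ`, of the second variation of the energy
`∫ (√(1 + |∇u|²) - F(u))`, where `F' = f`. -/
def secondVariation (f : ℝ → ℝ) (u φ ψ : E → ℝ) (x : E) : ℝ :=
  areaHessian (gradient u x) (gradient φ x) (gradient ψ x) - deriv f (u x) * (φ x * ψ x)

/-- The integrand of the equation satisfied by `x · ∇u`, tested with `φ`; that equation is the
derivative along dilations of the equation for `u`. -/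
def linearizedDensity (f : ℝ → ℝ) (u φ : E → ℝ) (x : E) : ℝ :=
  secondVariation f u (radialDeriv u) φ x
    - (1 / areaElement (gradient u x) + 1 / areaElement (gradient u x) ^ 3)
      * ⟪gradient u x, gradient φ x⟫

lemma contDiff_firstVariation (hf : ContDiff ℝ 1 f) (hu : ContDiff ℝ 2 u) (hφ : ContDiff ℝ 2 φ) :
    ContDiff ℝ 1 (firstVariation f u φ) := by
  have hP : ContDiff ℝ 1 (gradient u) := contDiff_gradient hu (by norm_num)
  have hN : ContDiff ℝ 1 (gradient φ) := contDiff_gradient hφ (by norm_num)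
  exact ((hP.inner ℝ hN).div (contDiff_areaElement.comp hP) (by simp)).sub
    ((hf.comp (hu.of_le (by norm_num))).mul (hφ.of_le (by norm_num)))

lemma hasCompactSupport_firstVariation (hc : HasCompactSupport φ) :
    HasCompactSupport (firstVariation f u φ) :=
  .intro hc fun x hx => by
    simp [firstVariation, image_eq_zero_of_notMem_tsupport hx,
      gradient_eq_zero_of_notMem_tsupport hx]

lemma integrable_firstVariation [MeasurableSpace E] [BorelSpace E] {μ : Measure E}
    [IsFiniteMeasureOnCompacts μ] (hf : Continuous f) (hu : ContDiff ℝ 1 u) (hφ : ContDiff ℝ 1 φ)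
    (hc : HasCompactSupport φ) : Integrable (firstVariation f u φ) μ := by
  have := (contDiff_gradient (k := 0) hu (by norm_num)).continuous
  have := (contDiff_gradient (k := 0) hφ (by norm_num)).continuous
  have := hu.continuous
  have := hφ.continuous
  refine Continuous.integrable_of_hasCompactSupport ?_ (hasCompactSupport_firstVariation hc)
  unfold firstVariation
  fun_prop (disch := simp)

lemma integrable_secondVariation [MeasurableSpace E] [BorelSpace E] {μ : Measure E}
    [IsFiniteMeasureOnCompacts μ] (hf : ContDiff ℝ 1 f) (hu : ContDiff ℝ 1 u)
    (hv : ContDiff ℝ 1 v) (hφ : ContDiff ℝ 1 φ) (hc : HasCompactSupport φ) :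
    Integrable (secondVariation f u v φ) μ := by
  have := (contDiff_gradient (k := 0) hu (by norm_num)).continuous
  have := (contDiff_gradient (k := 0) hv (by norm_num)).continuous
  have := (contDiff_gradient (k := 0) hφ (by norm_num)).continuous
  have := hu.continuous
  have := hv.continuous
  have := hφ.continuous
  have := hf.continuous_deriv_one
  refine Continuous.integrable_of_hasCompactSupport ?_
    (.intro hc fun x hx => by
      simp [secondVariation, areaHessian, image_eq_zero_of_notMem_tsupport hx,
        gradient_eq_zero_of_notMem_tsupport hx])
  unfold secondVariation
  fun_prop

lemma integrable_linearizedDensity [MeasurableSpace E] [BorelSpace E] {μ : Measure E}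
    [IsFiniteMeasureOnCompacts μ] (hf : ContDiff ℝ 1 f) (hu : ContDiff ℝ 2 u)
    (hφ : ContDiff ℝ 1 φ) (hc : HasCompactSupport φ) :
    Integrable (linearizedDensity f u φ) μ := by
  have := (contDiff_gradient (k := 0) hu (by norm_num)).continuous
  have := (contDiff_gradient (k := 0) hφ (by norm_num)).continuous
  refine (integrable_secondVariation hf (hu.of_le (by norm_num))
    (contDiff_radialDeriv hu (by norm_num)) hφ hc).sub
    (Continuous.integrable_of_hasCompactSupport (by fun_prop (disch := simp)) ?_)
  exact .intro hc fun x hx => by simp [gradient_eq_zero_of_notMem_tsupport hx]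

lemma hasDerivAt_gradient_line (hu : ContDiff ℝ 2 u) (x y : E) :
    HasDerivAt (fun t : ℝ => gradient u (x + t • y)) (fderiv ℝ (gradient u) x y) 0 :=
  (((contDiff_gradient (k := 1) hu (by norm_num)).differentiable one_ne_zero
    x).hasFDerivAt.hasLineDerivAt y)

lemma hasLineDerivAt_firstVariation (hf : ContDiff ℝ 1 f) (hu : ContDiff ℝ 2 u)
    (hφ : ContDiff ℝ 2 φ) (x : E) :
    HasLineDerivAt ℝ (firstVariation f u φ)
      (linearizedDensity f u φ x + firstVariation f u (radialDeriv φ) x) x x := by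
  have hflux := hasDerivAt_inner_div_areaElement (hasDerivAt_gradient_line hu x x)
    (hasDerivAt_gradient_line hφ x x)
  have hu' : HasDerivAt (fun t : ℝ => u (x + t • x)) (radialDeriv u x) 0 :=
    hasLineDerivAt_inner_gradient (hu.differentiable two_ne_zero x) x
  have hφ' : HasDerivAt (fun t : ℝ => φ (x + t • x)) (radialDeriv φ x) 0 :=
    hasLineDerivAt_inner_gradient (hφ.differentiable two_ne_zero x) x
  have hfu := (hf.differentiable one_ne_zero (u (x + (0 : ℝ) • x))).hasDerivAt.comp 0 hu'
  refine (hflux.sub (hfu.mul hφ')).congr_deriv ?_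
  simp only [zero_smul, add_zero, Function.comp_apply, linearizedDensity, secondVariation,
    firstVariation, (hasGradientAt_radialDeriv hu x).gradient,
    (hasGradientAt_radialDeriv hφ x).gradient, areaHessian_add_left,
    areaHessian_self_left, inner_add_right]
  ring

lemma secondVariation_mul_self {x : E} (hv : DifferentiableAt ℝ v x) (hη : DifferentiableAt ℝ η x) :
    secondVariation f u (fun y => v y * η y) (fun y => v y * η y) x =
      secondVariation f u v (fun y => v y * η y * η y) x
        + v x ^ 2 * areaHessian (gradient u x) (gradient η x) (gradient η x) := by
  have hξ := hasGradientAt_mul hv.hasGradientAt hη.hasGradientAt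
  have hφ := hasGradientAt_mul hξ hη.hasGradientAt
  have hφ' : gradient (fun y => v y * η y * η y) x
      = η x ^ 2 • gradient v x + (2 * v x * η x) • gradient η x := by
    rw [hφ.gradient]
    module
  rw [secondVariation, secondVariation, hξ.gradient, hφ', areaHessian_smul_add_smul]
  ring

lemma hasLineDerivAt_norm_sq_div_areaElement_mul_sq (hu : ContDiff ℝ 2 u)
    (hη : Differentiable ℝ η) (x : E) :
    HasLineDerivAt ℝ (fun y => ‖gradient u y‖ ^ 2 / areaElement (gradient u y) * η y ^ 2)
      ((1 / areaElement (gradient u x) + 1 / areaElement (gradient u x) ^ 3)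
          * ⟪gradient u x, fderiv ℝ (gradient u) x x⟫ * η x ^ 2
        + ‖gradient u x‖ ^ 2 / areaElement (gradient u x) * (2 * η x * radialDeriv η x)) x x := by
  have hη' : HasDerivAt (fun t : ℝ => η (x + t • x)) (radialDeriv η x) 0 :=
    hasLineDerivAt_inner_gradient (hη x) x
  refine ((hasDerivAt_norm_sq_div_areaElement (hasDerivAt_gradient_line hu x x)).mul
    (hη'.pow 2)).congr_deriv ?_
  simp

/-- The integrand of the energy inequality that stability yields for the test function
`(x · ∇u) η`, at a point `x` where `p = ∇u x`, `e = η x` and `ν = ∇η x`. -/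
def radialDensity (x p : E) (e : ℝ) (ν : E) : ℝ :=
  ⟪x, p⟫ ^ 2 * areaHessian p ν ν
    + (1 / areaElement p + 1 / areaElement p ^ 3) * (e ^ 2 * ‖p‖ ^ 2 + 2 * ⟪x, p⟫ * e * ⟪p, ν⟫)
    - ‖p‖ ^ 2 / areaElement p * (2 * e * ⟪x, ν⟫ + Module.finrank ℝ E * e ^ 2)

lemma radialDensity_eq (hu : ContDiff ℝ 2 u) (hη : Differentiable ℝ η) (x : E) :
    radialDensity x (gradient u x) (η x) (gradient η x) =
      secondVariation f u (fun y => radialDeriv u y * η y) (fun y => radialDeriv u y * η y) x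
      - linearizedDensity f u (fun y => radialDeriv u y * η y * η y) x
      - (lineDeriv ℝ
          (fun y => ‖gradient u y‖ ^ 2 / areaElement (gradient u y) * η y ^ 2) x x
        + Module.finrank ℝ E
          * (‖gradient u x‖ ^ 2 / areaElement (gradient u x) * η x ^ 2)) := by
  have hv := (hasGradientAt_radialDeriv hu x).differentiableAt
  have hφ := hasGradientAt_mul (hasGradientAt_mul (hasGradientAt_radialDeriv hu x)
    (hη x).hasGradientAt) (hη x).hasGradientAt
  rw [secondVariation_mul_self hv (hη x), linearizedDensity, hφ.gradient,
    (hasLineDerivAt_norm_sq_div_areaElement_mul_sq hu hη x).lineDeriv, radialDensity]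
  simp only [radialDeriv, inner_add_right, real_inner_smul_right, real_inner_self_eq_norm_sq]
  ring

end Variation

section Stability

variable {n : ℕ} {f : ℝ → ℝ} {u φ ξ η : Euc n → ℝ}

lemma integral_firstVariation_eq_zero (hf : Continuous f) (hu : ContDiff ℝ 1 u)
    (hweak : IsWeakSolution Set.univ f u) (hφ : ContDiff ℝ (⊤ : ℕ∞) φ) (hc : HasCompactSupport φ) :
    ∫ x, firstVariation f u φ x = 0 := by
  have := (contDiff_gradient (k := 0) hu (by norm_num)).continuous
  have := (contDiff_gradient (k := 0) hφ (by simp)).continuous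
  have := hu.continuous
  have := hφ.continuous
  have hsource : Integrable fun x => f (u x) * φ x :=
    Continuous.integrable_of_hasCompactSupport (by fun_prop) hc.mul_left
  have hflux : Integrable fun x => ⟪gradient u x, gradient φ x⟫ / areaElement (gradient u x) := by
    refine ((integrable_firstVariation hf hu (hφ.of_le (by simp)) hc).add hsource).congr ?_
    exact .of_forall fun x => sub_add_cancel _ _
  have heq := hweak.2.2.2 φ ⟨hφ, hc, Set.subset_univ _⟩
  simp only [Measure.restrict_univ] at heq
  simp only [firstVariation]
  rw [integral_sub hflux hsource, sub_eq_zero]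
  exact heq

lemma integral_linearizedDensity_eq_zero_of_smooth (hf : ContDiff ℝ 1 f) (hu : ContDiff ℝ 2 u)
    (hweak : IsWeakSolution Set.univ f u) (hφ : ContDiff ℝ (⊤ : ℕ∞) φ)
    (hc : HasCompactSupport φ) : ∫ x, linearizedDensity f u φ x = 0 := by
  have hu₁ : ContDiff ℝ 1 u := hu.of_le (by norm_num)
  have hφ₂ : ContDiff ℝ 2 φ := contDiff_infty.1 hφ 2
  have hφ₁ : ContDiff ℝ 1 φ := hφ₂.of_le (by norm_num)
  have hrφ : ContDiff ℝ (⊤ : ℕ∞) (radialDeriv φ) := contDiff_radialDeriv hφ (by simp)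
  have hrφ_c : HasCompactSupport (radialDeriv φ) := .intro hc fun x hx => by
    simp [radialDeriv, gradient_eq_zero_of_notMem_tsupport hx]
  have hlin := integrable_linearizedDensity (μ := volume) hf hu hφ₁ hc
  have hfirst := integrable_firstVariation (μ := volume) hf.continuous hu₁ hφ₁ hc
  have hfirst' := integrable_firstVariation (μ := volume) hf.continuous hu₁ (hrφ.of_le (by simp))
    hrφ_c
  have hdiv := integral_radial_divergence_eq_zero (μ := volume)
    (contDiff_firstVariation hf hu hφ₂) (hasCompactSupport_firstVariation hc)
    (hasLineDerivAt_firstVariation hf hu hφ₂)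
  rw [integral_add (hlin.fun_add hfirst') (hfirst.const_mul _), integral_add hlin hfirst',
    integral_const_mul, integral_firstVariation_eq_zero hf.continuous hu₁ hweak hφ hc,
    integral_firstVariation_eq_zero hf.continuous hu₁ hweak hrφ hrφ_c] at hdiv
  simpa using hdiv

lemma integral_linearizedDensity_eq_zero (hf : ContDiff ℝ 1 f) (hu : ContDiff ℝ 2 u)
    (hweak : IsWeakSolution Set.univ f u) (hφ : ContDiff ℝ 1 φ) (hc : HasCompactSupport φ) :
    ∫ x, linearizedDensity f u φ x = 0 := by
  have hv : ContDiff ℝ 1 (radialDeriv u) := contDiff_radialDeriv hu (by norm_num)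
  have := (contDiff_gradient (k := 0) hu (by norm_num)).continuous
  have := (contDiff_gradient (k := 0) hv (by norm_num)).continuous
  have := hu.continuous
  have := hv.continuous
  have := hf.continuous_deriv_one
  exact integral_mem_of_forall_smooth (S := {0})
    (Φ := fun z => areaHessian (gradient u z.1) (gradient (radialDeriv u) z.1) z.2.2
      - deriv f (u z.1) * (radialDeriv u z.1 * z.2.1)
      - (1 / areaElement (gradient u z.1) + 1 / areaElement (gradient u z.1) ^ 3)
        * ⟪gradient u z.1, z.2.2⟫)
    (by fun_prop (disch := simp)) (by simp [areaHessian]) isClosed_singleton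
    (fun s hs hsc => integral_linearizedDensity_eq_zero_of_smooth hf hu hweak hs hsc) hφ hc

lemma integral_secondVariation_nonneg (hf : ContDiff ℝ 1 f) (hu : ContDiff ℝ 1 u)
    (hstable : IsStableSolution Set.univ f u) (hξ : ContDiff ℝ 1 ξ) (hc : HasCompactSupport ξ) :
    0 ≤ ∫ x, secondVariation f u ξ ξ x := by
  have := (contDiff_gradient (k := 0) hu (by norm_num)).continuous
  have := hu.continuous
  have := hf.continuous_deriv_one
  refine integral_mem_of_forall_smooth (S := Set.Ici 0)
    (Φ := fun z => areaHessian (gradient u z.1) z.2.2 z.2.2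
      - deriv f (u z.1) * (z.2.1 * z.2.1))
    (by fun_prop) (by simp [areaHessian]) isClosed_Ici ?_ hξ hc
  intro s hs hsc
  have := hs.continuous
  have hpotential : Integrable fun x => deriv f (u x) * (s x * s x) :=
    Continuous.integrable_of_hasCompactSupport (by fun_prop) hsc.mul_left.mul_left
  have hhess : Integrable fun x => areaHessian (gradient u x) (gradient s x) (gradient s x) := by
    refine ((integrable_secondVariation hf hu (hs.of_le (by simp)) (hs.of_le (by simp)) hsc).add
      hpotential).congr ?_
    exact .of_forall fun x => sub_add_cancel _ _
  have hsecond := hstable.2.2 s ⟨hs, hsc, Set.subset_univ _⟩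
  simp only [Measure.restrict_univ, ← areaHessian_self_eq] at hsecond
  simp only [sq (s _)] at hsecond
  rw [Set.mem_Ici, integral_sub hhess hpotential]
  exact sub_nonneg.2 hsecond

lemma integral_radialDensity_nonneg (hf : ContDiff ℝ 1 f) (hu : ContDiff ℝ 2 u)
    (hstable : IsStableSolution Set.univ f u) (hη : ContDiff ℝ 1 η) (hc : HasCompactSupport η) :
    0 ≤ ∫ x, radialDensity x (gradient u x) (η x) (gradient η x) := by
  have hP : ContDiff ℝ 1 (gradient u) := contDiff_gradient hu (by norm_num)
  have hu₁ : ContDiff ℝ 1 u := hu.of_le (by norm_num)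
  have hη_diff : Differentiable ℝ η := hη.differentiable one_ne_zero
  have hξ : ContDiff ℝ 1 fun x => radialDeriv u x * η x :=
    (contDiff_radialDeriv hu (by norm_num)).mul hη
  let G (x : Euc n) : ℝ := ‖gradient u x‖ ^ 2 / areaElement (gradient u x) * η x ^ 2
  have hG : ContDiff ℝ 1 G :=
    ((hP.norm_sq ℝ).div (contDiff_areaElement.comp hP) (by simp)).mul (hη.pow 2)
  have hGc : HasCompactSupport G := .intro hc fun x hx => by
    simp [G, image_eq_zero_of_notMem_tsupport hx]
  have hsecond := integrable_secondVariation (μ := volume) hf hu₁ hξ hξ hc.mul_left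
  have hlin := integrable_linearizedDensity (μ := volume) hf hu (hξ.mul hη) hc.mul_left
  have hG' (x : Euc n) : HasLineDerivAt ℝ G (lineDeriv ℝ G x x) x x :=
    (hG.differentiable one_ne_zero x).lineDifferentiableAt.hasLineDerivAt
  simp_rw [radialDensity_eq (f := f) hu hη_diff]
  rw [integral_sub (hsecond.sub' hlin) (integrable_radial_divergence hG hGc hG'),
    integral_sub hsecond hlin, integral_radial_divergence_eq_zero hG hGc hG',
    integral_linearizedDensity_eq_zero hf hu hstable.1 (hξ.mul hη) hc.mul_left]
  simpa using integral_secondVariation_nonneg hf hu₁ hstable hξ hc.mul_left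

end Stability

section PointwiseBounds

variable {E : Type*} [NormedAddCommGroup E]

/-- The exponents `a` for which the weight `|x|^(-a)` makes the energy inequality in dimension `m`
coercive: the two bounds are the sign of `decayForm m y t a` at `(y, t) = (0, 1)` and `(1, 1)`. -/
structure IsAdmissibleExponent (m a : ℝ) : Prop where
  nonneg : 0 ≤ a
  two_mul_le : 2 * a ≤ m - 2
  sq_sub_one_le : (a - 1) ^ 2 ≤ m - 1

/-- The value of `radialDensity` for the weight `|x|^(-a)` in dimension `m`, up to a positive
factor; `y` is the squared cosine of the angle between `x` and `∇u`, and `t = 1 / (1 + |∇u|²)`. -/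
def decayForm (m y t a : ℝ) : ℝ :=
  a ^ 2 * y * (1 - y * (1 - t)) + (1 + t) * (1 - 2 * a * y) - m + 2 * a

lemma decayForm_nonpos {m y t a : ℝ} (ha : IsAdmissibleExponent m a)
    (hy : y ∈ Set.Icc 0 1) (ht : t ∈ Set.Icc 0 1) : decayForm m y t a ≤ 0 := by
  obtain ⟨hy₀, hy₁⟩ := hy
  obtain ⟨ht₀, ht₁⟩ := ht
  obtain ⟨-, hlin, hquad⟩ := ha
  have h_one : decayForm m y 1 a ≤ 0 :=
    calc decayForm m y 1 a = (1 - y) * (2 * a - (m - 2)) + y * ((a - 1) ^ 2 - (m - 1)) := by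
          rw [decayForm]; ring
      _ ≤ 0 := add_nonpos (mul_nonpos_of_nonneg_of_nonpos (by linarith) (by linarith))
          (mul_nonpos_of_nonneg_of_nonpos hy₀ (by linarith))
  have h_zero : decayForm m y 0 a ≤ 0 :=
    calc decayForm m y 0 a = (a + 2) ^ 2 / 4 - (m - 1) - (a * y - (a - 2) / 2) ^ 2 := by
          rw [decayForm]; ring
      _ ≤ (a + 2) ^ 2 / 4 - (m - 1) := sub_le_self _ (sq_nonneg _)
      _ ≤ 0 := by linarith
  calc decayForm m y t a = t * decayForm m y 1 a + (1 - t) * decayForm m y 0 a := by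
        simp only [decayForm]; ring
    _ ≤ 0 := add_nonpos (mul_nonpos_of_nonneg_of_nonpos ht₀ h_one)
        (mul_nonpos_of_nonneg_of_nonpos (by linarith) h_zero)

lemma decayForm_mul_le {m y t a θ : ℝ} (ha : IsAdmissibleExponent m a)
    (hy : y ∈ Set.Icc 0 1) (ht : t ∈ Set.Icc 0 1) (hθ : θ ∈ Set.Icc 0 1) :
    decayForm m y t (a * θ) ≤ -((1 - θ) * (1 - t)) := by
  have hform := decayForm_nonpos ha hy ht
  obtain ⟨hy₀, hy₁⟩ := hy
  obtain ⟨ht₀, -⟩ := ht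
  obtain ⟨hθ₀, hθ₁⟩ := hθ
  have hm : 2 ≤ m := by linarith [ha.nonneg, ha.two_mul_le]
  have hconvex : 0 ≤ a ^ 2 * y * (1 - y * (1 - t)) :=
    mul_nonneg (by positivity) (by nlinarith)
  calc decayForm m y t (a * θ)
      = θ * decayForm m y t a + (1 - θ) * (1 + t - m)
        - θ * (1 - θ) * (a ^ 2 * y * (1 - y * (1 - t))) := by simp only [decayForm]; ring
    _ ≤ θ * 0 + (1 - θ) * (-(1 - t)) - 0 := by
        have := mul_nonneg (mul_nonneg hθ₀ (sub_nonneg.2 hθ₁)) hconvex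
        gcongr
        linarith
    _ = -((1 - θ) * (1 - t)) := by ring

/-- The energy that the weighted inequality controls, at a point `x` where `p = ∇u x` and the
weight has the value `e`. -/
def dissipation (x p : E) (e : ℝ) : ℝ :=
  e ^ 2 * ‖p‖ ^ 4 / (areaElement p ^ 3 * (1 + ‖x‖ ^ 2))

lemma dissipation_nonneg (x p : E) (e : ℝ) : 0 ≤ dissipation x p e := by
  have := areaElement_pos p
  unfold dissipation
  positivity

variable [InnerProductSpace ℝ E]

lemma exists_sq_inner_eq_mul (x p : E) :
    ∃ y ∈ Set.Icc (0 : ℝ) 1, ⟪x, p⟫ ^ 2 = y * (‖x‖ ^ 2 * ‖p‖ ^ 2) := by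
  have hle : ⟪x, p⟫ ^ 2 ≤ ‖x‖ ^ 2 * ‖p‖ ^ 2 := by
    rw [← mul_pow]
    exact sq_le_sq.2 ((abs_real_inner_le_norm x p).trans (le_abs_self _))
  exact ⟨⟪x, p⟫ ^ 2 / (‖x‖ ^ 2 * ‖p‖ ^ 2), ⟨by positivity, div_le_one_of_le₀ hle (by positivity)⟩,
    (div_mul_cancel_of_imp fun h => le_antisymm (h ▸ hle) (sq_nonneg _)).symm⟩

lemma radialDensity_neg_smul {x p : E} {y : ℝ} (hy : ⟪x, p⟫ ^ 2 = y * (‖x‖ ^ 2 * ‖p‖ ^ 2))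
    (e b : ℝ) : radialDensity x p e (-(b * e) • x) =
      e ^ 2 * ‖p‖ ^ 2 / areaElement p *
        decayForm (Module.finrank ℝ E) y (1 / areaElement p ^ 2) (b * ‖x‖ ^ 2) := by
  have hhess : areaHessian p (-(b * e) • x) (-(b * e) • x) = (b * e) ^ 2 *
      (‖x‖ ^ 2 / areaElement p - ⟪x, p⟫ ^ 2 / areaElement p ^ 3) := by
    simp only [areaHessian, real_inner_smul_left, real_inner_smul_right]
    rw [real_inner_self_eq_norm_sq, real_inner_comm x p]
    ring
  have hp : ‖p‖ ^ 2 = areaElement p ^ 2 - 1 := by rw [areaElement_sq]; ring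
  calc radialDensity x p e (-(b * e) • x)
      = ⟪x, p⟫ ^ 2 * ((b * e) ^ 2 *
          (‖x‖ ^ 2 / areaElement p - ⟪x, p⟫ ^ 2 / areaElement p ^ 3))
        + (1 / areaElement p + 1 / areaElement p ^ 3)
          * (e ^ 2 * ‖p‖ ^ 2 - 2 * b * e ^ 2 * ⟪x, p⟫ ^ 2)
        - ‖p‖ ^ 2 / areaElement p
          * (Module.finrank ℝ E * e ^ 2 - 2 * b * e ^ 2 * ‖x‖ ^ 2) := by
        simp only [radialDensity, hhess, real_inner_smul_right, real_inner_self_eq_norm_sq,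
          real_inner_comm x p]
        ring
    _ = _ := by
        rw [hy, decayForm, hp]
        field_simp
        ring

lemma radialDensity_le_neg_dissipation {a : ℝ}
    (ha : IsAdmissibleExponent (Module.finrank ℝ E) a) (x p : E) (e : ℝ) :
    radialDensity x p e (-(a / (1 + ‖x‖ ^ 2) * e) • x) ≤ -dissipation x p e := by
  obtain ⟨y, hy, hxp⟩ := exists_sq_inner_eq_mul x p
  have hw := areaElement_pos p
  have ht : 1 / areaElement p ^ 2 ∈ Set.Icc (0 : ℝ) 1 :=
    ⟨by positivity, div_le_one_of_le₀ (one_le_pow₀ (one_le_areaElement p)) (by positivity)⟩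
  have hθ : ‖x‖ ^ 2 / (1 + ‖x‖ ^ 2) ∈ Set.Icc (0 : ℝ) 1 :=
    ⟨by positivity, div_le_one_of_le₀ (by linarith) (by positivity)⟩
  have hp : ‖p‖ ^ 2 = areaElement p ^ 2 - 1 := by rw [areaElement_sq]; ring
  calc radialDensity x p e (-(a / (1 + ‖x‖ ^ 2) * e) • x)
      = e ^ 2 * ‖p‖ ^ 2 / areaElement p * decayForm (Module.finrank ℝ E) y
          (1 / areaElement p ^ 2) (a * (‖x‖ ^ 2 / (1 + ‖x‖ ^ 2))) := by
        rw [radialDensity_neg_smul hxp, div_mul_eq_mul_div a, mul_div_assoc a]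
    _ ≤ e ^ 2 * ‖p‖ ^ 2 / areaElement p *
          -((1 - ‖x‖ ^ 2 / (1 + ‖x‖ ^ 2)) * (1 - 1 / areaElement p ^ 2)) :=
        mul_le_mul_of_nonneg_left (decayForm_mul_le ha hy ht hθ) (by positivity)
    _ = -dissipation x p e := by
        rw [dissipation, show ‖p‖ ^ 4 = (‖p‖ ^ 2) ^ 2 by ring, hp]
        field_simp
        ring

lemma two_mul_abs_mul_le (e r : ℝ) : 2 * |e| * r ≤ e ^ 2 + r ^ 2 := by
  simpa only [sq_abs] using two_mul_le_add_sq |e| r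

lemma neg_two_mul_inner_add_le (x ν : E) (e : ℝ) (m : ℕ) :
    -(2 * e * ⟪x, ν⟫ + m * e ^ 2) ≤ e ^ 2 + (‖x‖ * ‖ν‖) ^ 2 :=
  calc -(2 * e * ⟪x, ν⟫ + m * e ^ 2)
      ≤ -(2 * e * ⟪x, ν⟫) := neg_le_neg (le_add_of_nonneg_right (by positivity))
    _ ≤ |2 * e * ⟪x, ν⟫| := neg_le_abs _
    _ = 2 * |e| * |⟪x, ν⟫| := by simp only [abs_mul, abs_two]
    _ ≤ 2 * |e| * (‖x‖ * ‖ν‖) := by grw [abs_real_inner_le_norm x ν]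
    _ ≤ e ^ 2 + (‖x‖ * ‖ν‖) ^ 2 := two_mul_abs_mul_le e (‖x‖ * ‖ν‖)

lemma radialDensity_le (x p : E) (e : ℝ) (ν : E) :
    radialDensity x p e ν ≤ 5 * ‖p‖ ^ 2 * (e ^ 2 + (‖x‖ * ‖ν‖) ^ 2) := by
  have hw := areaElement_pos p
  have hw₁ := one_le_areaElement p
  have hhess : ⟪x, p⟫ ^ 2 * areaHessian p ν ν ≤ ‖p‖ ^ 2 * (‖x‖ * ‖ν‖) ^ 2 :=
    calc ⟪x, p⟫ ^ 2 * areaHessian p ν ν ≤ (‖x‖ * ‖p‖) ^ 2 * ‖ν‖ ^ 2 := by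
          rw [← sq_abs ⟪x, p⟫]
          grw [areaHessian_self_le p ν, abs_real_inner_le_norm x p]
      _ = ‖p‖ ^ 2 * (‖x‖ * ‖ν‖) ^ 2 := by ring
  have hcross : 2 * ⟪x, p⟫ * e * ⟪p, ν⟫ ≤ ‖p‖ ^ 2 * (e ^ 2 + (‖x‖ * ‖ν‖) ^ 2) :=
    calc 2 * ⟪x, p⟫ * e * ⟪p, ν⟫ ≤ |2 * ⟪x, p⟫ * e * ⟪p, ν⟫| := le_abs_self _
      _ = 2 * |e| * (|⟪x, p⟫| * |⟪p, ν⟫|) := by simp only [abs_mul, abs_two]; ring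
      _ ≤ 2 * |e| * ((‖x‖ * ‖p‖) * (‖p‖ * ‖ν‖)) := by
          gcongr <;> exact abs_real_inner_le_norm _ _
      _ = ‖p‖ ^ 2 * (2 * |e| * (‖x‖ * ‖ν‖)) := by ring
      _ ≤ ‖p‖ ^ 2 * (e ^ 2 + (‖x‖ * ‖ν‖) ^ 2) := by grw [two_mul_abs_mul_le]
  have hcoeff : 1 / areaElement p + 1 / areaElement p ^ 3 ≤ 1 + 1 :=
    add_le_add (div_le_one_of_le₀ hw₁ hw.le)
      (div_le_one_of_le₀ (one_le_pow₀ hw₁) (by positivity))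
  calc radialDensity x p e ν
      = ⟪x, p⟫ ^ 2 * areaHessian p ν ν
        + (1 / areaElement p + 1 / areaElement p ^ 3)
          * (e ^ 2 * ‖p‖ ^ 2 + 2 * ⟪x, p⟫ * e * ⟪p, ν⟫)
        + ‖p‖ ^ 2 / areaElement p * -(2 * e * ⟪x, ν⟫ + Module.finrank ℝ E * e ^ 2) := by
        rw [radialDensity]; ring
    _ ≤ ‖p‖ ^ 2 * (‖x‖ * ‖ν‖) ^ 2
        + (1 + 1) * (e ^ 2 * ‖p‖ ^ 2 + ‖p‖ ^ 2 * (e ^ 2 + (‖x‖ * ‖ν‖) ^ 2))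
        + ‖p‖ ^ 2 * (e ^ 2 + (‖x‖ * ‖ν‖) ^ 2) := by
        grw [hhess, hcross, hcoeff, neg_two_mul_inner_add_le x ν e (Module.finrank ℝ E),
          div_le_self (sq_nonneg ‖p‖) hw₁]
    _ ≤ 5 * ‖p‖ ^ 2 * (e ^ 2 + (‖x‖ * ‖ν‖) ^ 2) := by
        nlinarith [mul_nonneg (sq_nonneg ‖p‖) (sq_nonneg (‖x‖ * ‖ν‖))]

end PointwiseBounds

section WeightedCutoff

variable {E : Type*} [NormedAddCommGroup E]

/-- The smooth version `(1 + |x|²)^(-a/2)` of the weight `|x|^(-a)`. -/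
def radialWeight (a : ℝ) (x : E) : ℝ :=
  (1 + ‖x‖ ^ 2) ^ (-(a / 2))

lemma radialWeight_pos (a : ℝ) (x : E) : 0 < radialWeight a x := by
  unfold radialWeight
  positivity

lemma radialWeight_sq_le {a : ℝ} (ha : 0 ≤ a) {x : E} (hx : 0 < ‖x‖) :
    radialWeight a x ^ 2 ≤ ‖x‖ ^ (-2 * a) :=
  calc radialWeight a x ^ 2 = (1 + ‖x‖ ^ 2) ^ (-a) := by
        rw [radialWeight, ← Real.rpow_mul_natCast (by positivity)]
        congr 1
        push_cast
        ring
    _ ≤ (‖x‖ ^ 2) ^ (-a) :=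
        Real.rpow_le_rpow_of_nonpos (by positivity) (by linarith) (by linarith)
    _ = ‖x‖ ^ (-2 * a) := by
        rw [← Real.rpow_natCast_mul hx.le]
        congr 1
        push_cast
        ring

lemma norm_sq_mul_radialWeight_sq_le {a q ε : ℝ} {m : ℕ} (ha : 0 ≤ a) (hq : a = q + m / 2)
    {x p : E} (hx : 0 < ‖x‖) (hp : ‖p‖ ≤ ε * ‖x‖ ^ q) :
    ‖p‖ ^ 2 * radialWeight a x ^ 2 ≤ ε ^ 2 * (‖x‖ ^ m)⁻¹ :=
  calc ‖p‖ ^ 2 * radialWeight a x ^ 2 ≤ (ε * ‖x‖ ^ q) ^ 2 * ‖x‖ ^ (-2 * a) := by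
        gcongr
        exact radialWeight_sq_le ha hx
    _ = ε ^ 2 * (‖x‖ ^ m)⁻¹ := by
        rw [mul_pow, ← Real.rpow_mul_natCast hx.le, mul_assoc, ← Real.rpow_add hx,
          ← Real.rpow_natCast ‖x‖ m, ← Real.rpow_neg hx.le, hq]
        congr 2
        push_cast
        ring

variable [InnerProductSpace ℝ E]

lemma contDiff_radialWeight (a : ℝ) {k : WithTop ℕ∞} :
    ContDiff ℝ k (radialWeight a : E → ℝ) :=
  (contDiff_const.add (contDiff_id.norm_sq ℝ)).rpow_const_of_ne fun x => by
    simp only [id_eq]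
    positivity

lemma hasGradientAt_radialWeight [CompleteSpace E] (a : ℝ) (x : E) :
    HasGradientAt (radialWeight a) (-(a / (1 + ‖x‖ ^ 2) * radialWeight a x) • x) x := by
  have hpos : 0 < 1 + ‖x‖ ^ 2 := by positivity
  refine ((((hasFDerivAt_id x).norm_sq.const_add 1).rpow_const (p := -(a / 2))
    (Or.inl hpos.ne')).congr_fderiv ?_)
  ext v
  simp [radialWeight, Real.rpow_sub_one hpos.ne']
  field_simp

/-- `ζ` is a cutoff function between the balls of radii `R` and `2R` about the origin, with
`|∇ζ| ≤ M / |x|`. -/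
structure IsRadialCutoff [CompleteSpace E] (M R : ℝ) (ζ : E → ℝ) : Prop where
  contDiff : ContDiff ℝ 1 ζ
  tsupport_subset : tsupport ζ ⊆ closedBall 0 (2 * R)
  mem_Icc (x : E) : ζ x ∈ Set.Icc (0 : ℝ) 1
  eqOn_one : Set.EqOn ζ 1 (ball 0 R)
  norm_mul_norm_gradient_le (x : E) : ‖x‖ * ‖gradient ζ x‖ ≤ M

lemma exists_isRadialCutoff [FiniteDimensional ℝ E] :
    ∃ M, ∀ R > 0, ∃ ζ : E → ℝ, IsRadialCutoff M R ζ := by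
  let φ : ContDiffBump (0 : E) := ⟨1, 2, one_pos, one_lt_two⟩
  have hfderiv : Continuous (fderiv ℝ φ) := φ.contDiff.continuous_fderiv one_ne_zero
  obtain ⟨M, hM⟩ : ∃ M, ∀ x, ‖‖x‖ * ‖fderiv ℝ φ x‖‖ ≤ M :=
    ((φ.hasCompactSupport.fderiv ℝ).norm.mul_left).exists_bound_of_continuous (by fun_prop)
  refine ⟨M, fun R hR => ⟨fun x => φ (R⁻¹ • x), ?_, ?_, ?_, ?_, ?_⟩⟩
  · exact φ.contDiff.comp (contDiff_const_smul _)
  · refine closure_minimal (fun x hx => ?_) isClosed_closedBall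
    contrapose! hx
    refine Function.notMem_support.2 (φ.zero_of_le_dist ?_)
    rw [mem_closedBall_zero_iff, not_le] at hx
    rw [dist_zero_right, norm_smul, norm_inv, Real.norm_of_nonneg hR.le, inv_mul_eq_div,
      le_div_iff₀ hR]
    exact hx.le
  · exact fun x => ⟨φ.nonneg, φ.le_one⟩
  · intro x hx
    refine φ.one_of_mem_closedBall ?_
    rw [mem_ball_zero_iff] at hx
    rw [mem_closedBall_zero_iff, norm_smul, norm_inv, Real.norm_of_nonneg hR.le, inv_mul_eq_div,
      div_le_one hR]
    exact hx.le
  · intro x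
    calc ‖x‖ * ‖gradient (fun y => φ (R⁻¹ • y)) x‖
        = ‖R⁻¹ • x‖ * ‖fderiv ℝ φ (R⁻¹ • x)‖ := by
          rw [gradient, LinearIsometryEquiv.norm_map, fderiv_comp_smul, norm_smul, norm_smul]
          ring
      _ ≤ M := (le_abs_self _).trans (hM _)

section Bounds

variable [FiniteDimensional ℝ E] {a q ε M R : ℝ} {ζ : E → ℝ} {x p : E}

lemma gradient_radialWeight_mul (hζ : DifferentiableAt ℝ ζ x) :
    gradient (fun y => radialWeight a y * ζ y) x =
      radialWeight a x • gradient ζ x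
        + ζ x • -(a / (1 + ‖x‖ ^ 2) * radialWeight a x) • x :=
  (hasGradientAt_mul (hasGradientAt_radialWeight a x) hζ.hasGradientAt).gradient

lemma IsRadialCutoff.gradient_eq_zero (hζ : IsRadialCutoff M R ζ) (hx : x ∈ ball 0 R) :
    gradient ζ x = 0 := by
  have heq : ζ =ᶠ[𝓝 x] fun _ => 1 := hζ.eqOn_one.eventuallyEq_of_mem (isOpen_ball.mem_nhds hx)
  rw [heq.gradient_eq, gradient_fun_const]

lemma IsRadialCutoff.radialDensity_mul_le_neg_dissipation (hζ : IsRadialCutoff M R ζ)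
    (ha : IsAdmissibleExponent (Module.finrank ℝ E) a) (hx : x ∈ ball 0 R) :
    radialDensity x p (radialWeight a x * ζ x) (gradient (fun y => radialWeight a y * ζ y) x)
      ≤ -dissipation x p (radialWeight a x) := by
  rw [gradient_radialWeight_mul (hζ.contDiff.differentiable one_ne_zero x),
    hζ.gradient_eq_zero hx, hζ.eqOn_one hx]
  simpa using radialDensity_le_neg_dissipation ha x p (radialWeight a x)

lemma IsRadialCutoff.norm_mul_norm_gradient_radialWeight_mul_le (hζ : IsRadialCutoff M R ζ)
    (ha : 0 ≤ a) :
    ‖x‖ * ‖gradient (fun y => radialWeight a y * ζ y) x‖ ≤ (a + M) * radialWeight a x := by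
  have hh := radialWeight_pos a x
  obtain ⟨hζ₀, hζ₁⟩ := hζ.mem_Icc x
  have hratio : ‖x‖ ^ 2 / (1 + ‖x‖ ^ 2) ≤ 1 := div_le_one_of_le₀ (by linarith) (by positivity)
  rw [gradient_radialWeight_mul (hζ.contDiff.differentiable one_ne_zero x)]
  calc ‖x‖ * ‖radialWeight a x • gradient ζ x
          + ζ x • -(a / (1 + ‖x‖ ^ 2) * radialWeight a x) • x‖
      ≤ ‖x‖ * (radialWeight a x * ‖gradient ζ x‖
          + ζ x * (a / (1 + ‖x‖ ^ 2) * radialWeight a x * ‖x‖)) := by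
        refine mul_le_mul_of_nonneg_left ((norm_add_le _ _).trans_eq ?_) (norm_nonneg x)
        rw [norm_smul, norm_smul, norm_smul, norm_neg, Real.norm_of_nonneg hh.le,
          Real.norm_of_nonneg hζ₀, Real.norm_of_nonneg (by positivity)]
    _ = (a * ζ x * (‖x‖ ^ 2 / (1 + ‖x‖ ^ 2)) + ‖x‖ * ‖gradient ζ x‖) * radialWeight a x := by ring
    _ ≤ (a * 1 * 1 + M) * radialWeight a x := by
        have := hζ.norm_mul_norm_gradient_le x
        gcongr
    _ = (a + M) * radialWeight a x := by ring

lemma IsRadialCutoff.radialDensity_mul_le (hζ : IsRadialCutoff M R ζ) (ha : 0 ≤ a) (hR : 0 < R)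
    (hq : a = q + (Module.finrank ℝ E : ℝ) / 2) (hRx : R ≤ ‖x‖) (hp : ‖p‖ ≤ ε * ‖x‖ ^ q) :
    radialDensity x p (radialWeight a x * ζ x) (gradient (fun y => radialWeight a y * ζ y) x)
      ≤ 5 * (1 + (a + M) ^ 2) * (ε ^ 2 * (R ^ Module.finrank ℝ E)⁻¹) := by
  have hh := radialWeight_pos a x
  obtain ⟨hζ₀, hζ₁⟩ := hζ.mem_Icc x
  have hx : 0 < ‖x‖ := hR.trans_le hRx
  calc radialDensity x p (radialWeight a x * ζ x) (gradient (fun y => radialWeight a y * ζ y) x)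
      ≤ 5 * ‖p‖ ^ 2 * ((radialWeight a x * ζ x) ^ 2
          + (‖x‖ * ‖gradient (fun y => radialWeight a y * ζ y) x‖) ^ 2) :=
        radialDensity_le ..
    _ ≤ 5 * ‖p‖ ^ 2 * ((radialWeight a x * 1) ^ 2 + ((a + M) * radialWeight a x) ^ 2) := by
        have := hζ.norm_mul_norm_gradient_radialWeight_mul_le ha (x := x)
        gcongr
    _ = 5 * (1 + (a + M) ^ 2) * (‖p‖ ^ 2 * radialWeight a x ^ 2) := by ring
    _ ≤ 5 * (1 + (a + M) ^ 2) * (ε ^ 2 * (‖x‖ ^ Module.finrank ℝ E)⁻¹) := by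
        grw [norm_sq_mul_radialWeight_sq_le ha hq hx hp]
    _ ≤ 5 * (1 + (a + M) ^ 2) * (ε ^ 2 * (R ^ Module.finrank ℝ E)⁻¹) := by gcongr

end Bounds

end WeightedCutoff

section Conclusion

lemma setIntegral_le_of_integral_nonneg {α : Type*} [MeasurableSpace α] {μ : Measure α}
    {s t : Set α} (hs : MeasurableSet s) (ht : MeasurableSet t) (hμt : μ t ≠ ⊤) {g D : α → ℝ}
    {c : ℝ} (hg : Integrable g μ) (hD : IntegrableOn D s μ) (hgs : ∀ x ∈ s, g x ≤ -D x)
    (hgt : ∀ x ∈ t \ s, g x ≤ c) (hg_out : ∀ x ∉ s ∪ t, g x ≤ 0) (hg_int : 0 ≤ ∫ x, g x ∂μ) :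
    ∫ x in s, D x ∂μ ≤ c * μ.real (t \ s) := by
  have hts : MeasurableSet (t \ s) := ht.diff hs
  have hDs : Integrable (s.indicator D) μ := (integrable_indicator_iff hs).2 hD
  have hc : Integrable ((t \ s).indicator fun _ => c) μ :=
    (integrable_indicator_iff hts).2
      (integrableOn_const (measure_ne_top_of_subset Set.sdiff_subset hμt))
  have hle (x : α) : g x ≤ (t \ s).indicator (fun _ => c) x - s.indicator D x := by
    by_cases hxs : x ∈ s
    · simpa [hxs] using hgs x hxs
    · by_cases hxt : x ∈ t
      · simpa [hxs, hxt] using hgt x ⟨hxt, hxs⟩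
      · simpa [hxs, hxt] using hg_out x (by simp [hxs, hxt])
  have hint := hg_int.trans (integral_mono hg (hc.sub hDs) hle)
  rw [integral_sub' hc hDs, integral_indicator hts, integral_indicator hs, setIntegral_const,
    smul_eq_mul, mul_comm] at hint
  exact sub_nonneg.1 hint

variable {n : ℕ} {f : ℝ → ℝ} {u η : Euc n → ℝ} {a q M R ε : ℝ}

lemma integrable_radialDensity (hu : ContDiff ℝ 1 u) (hη : ContDiff ℝ 1 η)
    (hc : HasCompactSupport η) :
    Integrable fun x => radialDensity x (gradient u x) (η x) (gradient η x) := by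
  have := (contDiff_gradient (k := 0) hu (by norm_num)).continuous
  have := (contDiff_gradient (k := 0) hη (by norm_num)).continuous
  have := hη.continuous
  refine Continuous.integrable_of_hasCompactSupport ?_ (.intro hc fun x hx => ?_)
  · unfold radialDensity
    fun_prop (disch := simp)
  · simp [radialDensity, areaHessian, image_eq_zero_of_notMem_tsupport hx,
      gradient_eq_zero_of_notMem_tsupport hx]

lemma continuous_dissipation (hu : ContDiff ℝ 1 u) (a : ℝ) :
    Continuous fun x => dissipation x (gradient u x) (radialWeight a x) := by
  have := (contDiff_gradient (k := 0) hu (by norm_num)).continuous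
  have := (contDiff_radialWeight (E := Euc n) a (k := 0)).continuous
  unfold dissipation
  fun_prop (disch := intro x; have := areaElement_pos (gradient u x); positivity)

lemma integrableOn_dissipation_ball (hu : ContDiff ℝ 1 u) (a R : ℝ) :
    IntegrableOn (fun x => dissipation x (gradient u x) (radialWeight a x)) (ball 0 R) :=
  ((continuous_dissipation hu a).locallyIntegrable.integrableOn_isCompact
    (isCompact_closedBall 0 R)).mono_set ball_subset_closedBall

lemma volume_real_closedBall_diff_ball_le (hR : 0 < R) :
    volume.real (closedBall (0 : Euc n) (2 * R) \ ball 0 R)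
      ≤ (2 * R) ^ n * volume.real (ball (0 : Euc n) 1) :=
  calc volume.real (closedBall (0 : Euc n) (2 * R) \ ball 0 R)
      ≤ volume.real (closedBall (0 : Euc n) (2 * R)) :=
        measureReal_mono Set.sdiff_subset measure_closedBall_lt_top.ne
    _ = (2 * R) ^ n * volume.real (ball (0 : Euc n) 1) := by
        rw [Measure.addHaar_real_closedBall _ _ (by positivity), finrank_euclideanSpace_fin]

lemma IsRadialCutoff.setIntegral_dissipation_le {ζ : Euc n → ℝ} (hζ : IsRadialCutoff M R ζ)
    (hf : ContDiff ℝ 1 f) (hu : ContDiff ℝ 2 u) (hstable : IsStableSolution Set.univ f u)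
    (ha : IsAdmissibleExponent n a) (hq : a = q + (n : ℝ) / 2) (hR : 0 < R)
    (hgrowth : ∀ x, R ≤ ‖x‖ → ‖gradient u x‖ ≤ ε * ‖x‖ ^ q) :
    ∫ x in ball 0 R, dissipation x (gradient u x) (radialWeight a x)
      ≤ 5 * (1 + (a + M) ^ 2) * 2 ^ n * volume.real (ball (0 : Euc n) 1) * ε ^ 2 := by
  have hfinrank : Module.finrank ℝ (Euc n) = n := finrank_euclideanSpace_fin
  have hu₁ : ContDiff ℝ 1 u := hu.of_le (by norm_num)
  have hη : ContDiff ℝ 1 fun x => radialWeight a x * ζ x :=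
    (contDiff_radialWeight a).mul hζ.contDiff
  have hc : HasCompactSupport fun x => radialWeight a x * ζ x :=
    HasCompactSupport.mul_left (.of_isClosed_subset (isCompact_closedBall _ _)
      (isClosed_tsupport ζ) hζ.tsupport_subset)
  have hle := setIntegral_le_of_integral_nonneg measurableSet_ball measurableSet_closedBall
    (t := closedBall 0 (2 * R)) measure_closedBall_lt_top.ne (integrable_radialDensity hu₁ hη hc)
    (integrableOn_dissipation_ball hu₁ a R)
    (fun x hx => hζ.radialDensity_mul_le_neg_dissipation (by rwa [hfinrank]) hx)
    (fun x hx => hζ.radialDensity_mul_le ha.nonneg hR (by rwa [hfinrank])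
      (by simpa using hx.2) (hgrowth x (by simpa using hx.2)))
    (fun x hx => le_of_eq ?_) (integral_radialDensity_nonneg hf hu hstable hη hc)
  · rw [hfinrank] at hle
    calc _ ≤ _ := hle
      _ ≤ 5 * (1 + (a + M) ^ 2) * (ε ^ 2 * (R ^ n)⁻¹)
          * ((2 * R) ^ n * volume.real (ball (0 : Euc n) 1)) := by
        grw [volume_real_closedBall_diff_ball_le hR]
      _ = _ := by
        rw [mul_pow]
        field_simp
  · have hx' : x ∉ tsupport fun y => radialWeight a y * ζ y := fun h =>
      hx (.inr (hζ.tsupport_subset (tsupport_mul_subset_right h)))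
    have hη₀ : radialWeight a x * ζ x = 0 :=
      image_eq_zero_of_notMem_tsupport (f := fun y => radialWeight a y * ζ y) hx'
    rw [hη₀, gradient_eq_zero_of_notMem_tsupport hx']
    simp [radialDensity, areaHessian]

lemma setIntegral_dissipation_eq_zero (hf : ContDiff ℝ 1 f) (hu : ContDiff ℝ 2 u)
    (hstable : IsStableSolution Set.univ f u) (ha : IsAdmissibleExponent n a)
    (hq : a = q + (n : ℝ) / 2)
    (hgrowth : (fun x => ‖gradient u x‖) =o[cobounded (Euc n)] fun x => ‖x‖ ^ q) (ρ : ℝ) :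
    ∫ x in ball 0 ρ, dissipation x (gradient u x) (radialWeight a x) = 0 := by
  obtain ⟨M, hcutoff⟩ := exists_isRadialCutoff (E := Euc n)
  let C := 5 * (1 + (a + M) ^ 2) * 2 ^ n * volume.real (ball (0 : Euc n) 1)
  have hbound (ε : ℝ) (hε : 0 < ε) :
      ∫ x in ball 0 ρ, dissipation x (gradient u x) (radialWeight a x) ≤ C * ε ^ 2 := by
    obtain ⟨R₀, -, hR₀⟩ := hasBasis_cobounded_norm.eventually_iff.1 (hgrowth.def hε)
    let R := max (max R₀ 1) ρ
    have hR : 0 < R := by simp [R]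
    obtain ⟨ζ, hζ⟩ := hcutoff R hR
    calc ∫ x in ball 0 ρ, dissipation x (gradient u x) (radialWeight a x)
        ≤ ∫ x in ball 0 R, dissipation x (gradient u x) (radialWeight a x) :=
          setIntegral_mono_set (integrableOn_dissipation_ball (hu.of_le (by norm_num)) a R)
            (.of_forall fun x => dissipation_nonneg ..)
            (ball_subset_ball (le_max_right _ _)).eventuallyLE
      _ ≤ C * ε ^ 2 := by
          refine hζ.setIntegral_dissipation_le hf hu hstable ha hq hR fun x hx => ?_
          have hx₀ : R₀ ≤ ‖x‖ := ((le_max_left _ _).trans (le_max_left _ _)).trans hx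
          simpa [Real.abs_rpow_of_nonneg] using hR₀ hx₀
  have hlim : Tendsto (fun ε : ℝ => C * ε ^ 2) (𝓝[>] 0) (𝓝 0) := by
    simpa using (((continuous_pow 2).const_mul C).tendsto (0 : ℝ)).mono_left nhdsWithin_le_nhds
  exact le_antisymm (ge_of_tendsto hlim (eventually_mem_nhdsWithin.mono hbound))
    (integral_nonneg fun x => dissipation_nonneg ..)

lemma gradient_eq_zero_of_stable (hf : ContDiff ℝ 1 f) (hu : ContDiff ℝ 2 u)
    (hstable : IsStableSolution Set.univ f u) (ha : IsAdmissibleExponent n (q + n / 2))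
    (hgrowth : (fun x => ‖gradient u x‖) =o[cobounded (Euc n)] fun x => ‖x‖ ^ q) (x : Euc n) :
    gradient u x = 0 := by
  have hu₁ : ContDiff ℝ 1 u := hu.of_le (by norm_num)
  have hae := (setIntegral_eq_zero_iff_of_nonneg_ae (.of_forall fun x => dissipation_nonneg ..)
    (integrableOn_dissipation_ball hu₁ _ (‖x‖ + 1))).1
    (setIntegral_dissipation_eq_zero hf hu hstable ha rfl hgrowth (‖x‖ + 1))
  have hzero : dissipation x (gradient u x) (radialWeight (q + n / 2) x) = 0 :=
    Measure.eqOn_open_of_ae_eq hae isOpen_ball (continuous_dissipation hu₁ _).continuousOn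
      continuousOn_const (by simp)
  have hne : areaElement (gradient u x) ^ 3 * (1 + ‖x‖ ^ 2) ≠ 0 :=
    mul_ne_zero (by simp) (by positivity)
  simpa [dissipation, hne, (radialWeight_pos _ x).ne'] using hzero

/-- The critical growth exponent `q_n`. -/
def criticalExponent (n : ℕ) : ℝ :=
  if n ≤ 10 then -1 else -n / 2 + √(n - 1) + 1

lemma isAdmissibleExponent_criticalExponent_add (hn : 2 ≤ n) :
    IsAdmissibleExponent n (criticalExponent n + n / 2) := by
  have hn' : (2 : ℝ) ≤ n := by exact_mod_cast hn
  rcases le_or_gt n 10 with hn₁₀ | hn₁₀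
  · have hn₁₀' : (n : ℝ) ≤ 10 := by exact_mod_cast hn₁₀
    rw [criticalExponent, if_pos hn₁₀]
    exact ⟨by linarith, by linarith, by nlinarith⟩
  · have hn₁₁ : (11 : ℝ) ≤ n := by exact_mod_cast hn₁₀
    have hsq : √((n : ℝ) - 1) ^ 2 = n - 1 := Real.sq_sqrt (by linarith)
    have hthree : 3 ≤ √((n : ℝ) - 1) := Real.le_sqrt_of_sq_le (by linarith)
    rw [criticalExponent, if_neg hn₁₀.not_ge]
    exact ⟨by linarith, by nlinarith, by nlinarith⟩

theorem stmt_5_general (n : ℕ) (hn : 2 ≤ n) (f : ℝ → ℝ) (u : Euc n → ℝ) (hf : ContDiff ℝ 1 f)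
    (hreg : ContDiff ℝ 2 u) (hstable : IsStableSolution Set.univ f u)
    (hgrowth : (fun x => ‖gradient u x‖) =o[cobounded (Euc n)]
      fun x => ‖x‖ ^ criticalExponent n) :
    ∃ c₀ : ℝ, ∀ x, u x = c₀ := by
  have hgrad := gradient_eq_zero_of_stable hf hreg hstable
    (isAdmissibleExponent_criticalExponent_add hn) hgrowth
  refine ⟨u 0, fun x => is_const_of_fderiv_eq_zero (𝕜 := ℝ) (hreg.differentiable two_ne_zero)
    (fun y => ?_) x 0⟩
  simpa [gradient] using hgrad y

end Conclusion

/-- **Theorem (Liouville theorem for stable solutions).**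
Let `n ≥ 2`, `f ∈ C¹(ℝ)` and let `u` be a `W^{3,1}_loc(ℝⁿ)` stable solution of
`div(∇u/√(1+|∇u|²)) = -f(u)` in `ℝⁿ`.  Put `q_n = -1` if `2 ≤ n ≤ 10` and
`q_n = -n/2 + √(n-1) + 1` if `n ≥ 11`.  If `|∇u(x)| = o(|x|^{q_n})` as `|x| → ∞`,
then `u` is constant. -/
theorem stmt_5 (n : ℕ) (hn : 2 ≤ n) (f : ℝ → ℝ) (u : Euc n → ℝ)
    (hf : ContDiff ℝ 1 f)
    (hreg : ContDiff ℝ 3 u)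
    (hstable : IsStableSolution (Set.univ : Set (Euc n)) f u)
    (hgrowth : (fun x : Euc n => ‖gradient u x‖) =o[cobounded (Euc n)]
      fun x : Euc n => ‖x‖ ^ (if n ≤ 10 then (-1 : ℝ)
        else -(n:ℝ)/2 + Real.sqrt ((n:ℝ) - 1) + 1)) :
    ∃ c₀ : ℝ, ∀ x : Euc n, u x = c₀ := by
  exact stmt_5_general n hn f u hf (hreg.of_le (by norm_num)) hstable hgrowth
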